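/- For all real numbers p > 1 and x ≥ 2, we have x^p − (x − 1)^{p−1} · x ≥ p − 1. -/

import Mathlib

/-!
With `q = p - 1`, the difference `x ^ p - (x - 1) ^ (p - 1) * x` is `(x ^ q - (x - 1) ^ q) * x`. The
graph of `t ↦ t ^ q` lies on one side of its tangents, so `x ^ q - (x - 1) ^ q` is at least
`q * (x - 1) ^ (q - 1) ≥ q` if `1 ≤ q` (tangent at `x - 1`), and at least `q * x ^ (q - 1)` if
`q ≤ 1` (tangent at `x`); in the second case the factor `x` restores `q * x ^ q ≥ q`.
-/

section TangentLine

variable {S : Set ℝ} {f : ℝ → ℝ} {f' a b : ℝ}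

theorem mul_sub_le_sub_of_convexOn_of_hasDerivAt (hf : ConvexOn ℝ S f) (ha : a ∈ S) (hb : b ∈ S)
    (hf' : HasDerivAt f f' a) : f' * (b - a) ≤ f b - f a := by
  rcases lt_trichotomy a b with hab | rfl | hba
  · have h_slope := hf.le_slope_of_hasDerivAt ha hb hab hf'
    rwa [slope_def_field, le_div_iff₀ (sub_pos.2 hab)] at h_slope
  · simp
  · have h_slope := hf.slope_le_of_hasDerivAt hb ha hba hf'
    rw [slope_def_field, div_le_iff₀ (sub_pos.2 hba)] at h_slope
    linarith

theorem sub_le_mul_sub_of_concaveOn_of_hasDerivAt (hf : ConcaveOn ℝ S f) (ha : a ∈ S) (hb : b ∈ S)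
    (hf' : HasDerivAt f f' a) : f b - f a ≤ f' * (b - a) := by
  have h_neg := mul_sub_le_sub_of_convexOn_of_hasDerivAt hf.neg ha hb hf'.neg
  simp only [Pi.neg_apply] at h_neg
  linarith

end TangentLine

section RpowDifference

variable {a b q : ℝ}

theorem mul_sub_le_rpow_sub_rpow (hq : 1 ≤ q) (ha : 1 ≤ a) (hab : a ≤ b) :
    q * (b - a) ≤ b ^ q - a ^ q := by
  have ha₀ : 0 ≤ a := zero_le_one.trans ha
  have h_deriv : q ≤ q * a ^ (q - 1) :=
    le_mul_of_one_le_right (by linarith) (Real.one_le_rpow ha (sub_nonneg.2 hq))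
  calc q * (b - a) ≤ q * a ^ (q - 1) * (b - a) :=
        mul_le_mul_of_nonneg_right h_deriv (sub_nonneg.2 hab)
    _ ≤ b ^ q - a ^ q :=
        mul_sub_le_sub_of_convexOn_of_hasDerivAt (convexOn_rpow hq) ha₀ (ha₀.trans hab)
          (Real.hasDerivAt_rpow_const (.inr hq))

theorem mul_sub_le_rpow_sub_rpow_mul (hq₀ : 0 ≤ q) (hq₁ : q ≤ 1) (ha : 0 ≤ a) (hab : a ≤ b)
    (hb : 1 ≤ b) : q * (b - a) ≤ (b ^ q - a ^ q) * b := by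
  have hb₀ : 0 < b := zero_lt_one.trans_le hb
  have h_tangent : a ^ q - b ^ q ≤ q * b ^ (q - 1) * (a - b) :=
    sub_le_mul_sub_of_concaveOn_of_hasDerivAt (Real.concaveOn_rpow hq₀ hq₁) hb₀.le ha
      (Real.hasDerivAt_rpow_const (.inl hb₀.ne'))
  calc q * (b - a) ≤ q * (b - a) * b ^ q :=
        le_mul_of_one_le_right (mul_nonneg hq₀ (sub_nonneg.2 hab)) (Real.one_le_rpow hb hq₀)
    _ = q * b ^ (q - 1) * (b - a) * b := by
        rw [Real.rpow_sub_one hb₀.ne']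
        field_simp
    _ ≤ (b ^ q - a ^ q) * b := mul_le_mul_of_nonneg_right (by linarith) hb₀.le

end RpowDifference

/-- For all `p > 1` and `x ≥ 2`: `x^p − (x − 1)^{p−1}·x ≥ p − 1`. -/
theorem pow_sub_pow_mul_ge (p x : ℝ) (hp : 1 < p) (hx : 2 ≤ x) :
    p - 1 ≤ x ^ p - (x - 1) ^ (p - 1) * x := by
  have h_factor : x ^ p - (x - 1) ^ (p - 1) * x = (x ^ (p - 1) - (x - 1) ^ (p - 1)) * x := by
    rw [sub_mul, ← Real.rpow_add_one (by linarith), sub_add_cancel]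
  rw [h_factor]
  rcases le_total 1 (p - 1) with hq | hq
  · have h_diff : p - 1 ≤ x ^ (p - 1) - (x - 1) ^ (p - 1) := by
      simpa using mul_sub_le_rpow_sub_rpow hq (by linarith : 1 ≤ x - 1) (sub_le_self x zero_le_one)
    exact h_diff.trans (le_mul_of_one_le_right (by linarith) (by linarith))
  · simpa using mul_sub_le_rpow_sub_rpow_mul (by linarith) hq (by linarith : 0 ≤ x - 1)
      (sub_le_self x zero_le_one) (by linarith)
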